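/- arXiv:1703.01699 — 2 statements merged into one kernel-verified Lean document; each statement's English description precedes it below -/
import Mathlib

section
/- Fix real numbers a < b, T > 0 and integers M, N ≥ 1; set h = (b−a)/M, τ = T/N, grid points x_i = a + i·h for i = 0,…,M, and time levels t_k = k·τ for k = 0,…,N. Let φ : ℝ × ℝ × ℝⁿ × ℝ × ℝ → ℝⁿ satisfy ‖φ(t,x,y,τ,h) − φ(t,x,z,τ,h)‖_∞ ≤ L‖y − z‖_∞ for some L > 0 and all arguments. Let d_{k,i} ∈ [a,b] be given departure points for k = 0,…,N−1 and i = 0,…,M, and let (u^k_i) and (v^k_i) be two families of nodal values generated by the one-step semi-Lagrangian method u^{k+1}_i = P[u^k](d_{k,i}) + τ·φ(t_k, d_{k,i}, P[u^k](d_{k,i}), τ, h) and v^{k+1}_i = P[v^k](d_{k,i}) + τ·φ(t_k, d_{k,i}, P[v^k](d_{k,i}), τ, h), using the same departure points but possibly different initial nodal values u^0, v^0. Then for every k = 0,…,N, max_{0 ≤ i ≤ M} ‖u^k_i − v^k_i‖_∞ ≤ e^{T·L} · max_{0 ≤ i ≤ M} ‖u^0_i − v^0_i‖_∞. -/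
/-- The piecewise linear interpolant of the nodal values `w 0, …, w M` on the
uniform grid `x i = a + i*h`: on `[x i, x (i+1)]` it equals
`w i + ((x - x i)/h) • (w (i+1) - w i)`. -/
noncomputable def plin (n : ℕ) (a h : ℝ) (M : ℕ) (w : ℕ → Fin n → ℝ) (x : ℝ) :
    Fin n → ℝ :=
  let i := min (M - 1) (Nat.floor ((x - a) / h))
  w i + ((x - (a + (i : ℝ) * h)) / h) • (w (i + 1) - w i)

/-- Piecewise linear interpolation is nonexpansive in the nodal values. -/
theorem norm_plin_sub_le {n M : ℕ} {a h x C : ℝ} (hM : 1 ≤ M) (hh : 0 < h)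
    (hx : x ∈ Set.Icc a (a + M * h)) {w w' : ℕ → Fin n → ℝ}
    (hC : ∀ j ≤ M, ‖w j - w' j‖ ≤ C) :
    ‖plin n a h M w x - plin n a h M w' x‖ ≤ C := by
  obtain ⟨hax, hxb⟩ := hx
  unfold plin
  set i := min (M - 1) (Nat.floor ((x - a) / h)) with hi
  set s := (x - (a + (i : ℝ) * h)) / h with hs
  have hs_eq : s = (x - a) / h - i := by
    rw [hs]; field_simp; ring
  have hy : 0 ≤ (x - a) / h := div_nonneg (by linarith) hh.le
  have hs0 : 0 ≤ s := by
    have h1 : (i : ℝ) ≤ (Nat.floor ((x - a) / h) : ℝ) := by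
      exact_mod_cast min_le_right _ _
    have h2 := Nat.floor_le hy
    linarith
  have hs1 : s ≤ 1 := by
    rw [hs_eq]
    rcases min_choice (M - 1) (Nat.floor ((x - a) / h)) with hmin | hmin
    · have hiM : (i : ℝ) + 1 = M := by
        have : i + 1 = M := by omega
        exact_mod_cast this
      have : (x - a) / h ≤ M := by
        rw [div_le_iff₀ hh]; linarith
      linarith
    · rw [hi, hmin]
      linarith [Nat.lt_floor_add_one ((x - a) / h)]
  have hiM : i + 1 ≤ M := by omega
  have hcomb : w i + s • (w (i + 1) - w i) - (w' i + s • (w' (i + 1) - w' i))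
      = (1 - s) • (w i - w' i) + s • (w (i + 1) - w' (i + 1)) := by
    module
  calc ‖w i + s • (w (i + 1) - w i) - (w' i + s • (w' (i + 1) - w' i))‖
      ≤ (1 - s) * ‖w i - w' i‖ + s * ‖w (i + 1) - w' (i + 1)‖ := by
        rw [hcomb]
        refine (norm_add_le _ _).trans_eq ?_
        rw [norm_smul_of_nonneg (sub_nonneg.2 hs1), norm_smul_of_nonneg hs0]
    _ ≤ (1 - s) * C + s * C :=
        add_le_add (mul_le_mul_of_nonneg_left (hC i (by omega)) (sub_nonneg.2 hs1))
          (mul_le_mul_of_nonneg_left (hC _ hiM) hs0)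
    _ = C := by ring

/-- One explicit step `y ↦ y + τ • f y` with an `L`-Lipschitz increment expands distances
by at most the factor `exp (τ * L)`. -/
theorem norm_step_sub_le {E : Type*} [SeminormedAddCommGroup E] [NormedSpace ℝ E]
    {f : E → E} {τ L : ℝ} (hτ : 0 ≤ τ) {y z : E} (hf : ‖f y - f z‖ ≤ L * ‖y - z‖) :
    ‖(y + τ • f y) - (z + τ • f z)‖ ≤ Real.exp (τ * L) * ‖y - z‖ := by
  have hsplit : (y + τ • f y) - (z + τ • f z) = (y - z) + τ • (f y - f z) := by module
  calc ‖(y + τ • f y) - (z + τ • f z)‖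
      ≤ ‖y - z‖ + τ * ‖f y - f z‖ := by
        rw [hsplit, ← norm_smul_of_nonneg hτ]
        exact norm_add_le _ _
    _ ≤ ‖y - z‖ + τ * (L * ‖y - z‖) := by gcongr
    _ = (τ * L + 1) * ‖y - z‖ := by ring
    _ ≤ Real.exp (τ * L) * ‖y - z‖ := by
        gcongr
        exact Real.add_one_le_exp _

/-- Stability (part 1 of Theorem 3.5): two numerical solutions of the one-step
semi-Lagrangian method with the same departure points satisfy
`max_i ‖u^k_i - v^k_i‖_∞ ≤ e^{TL} · max_i ‖u^0_i - v^0_i‖_∞` for `k = 0, …, N`. -/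
theorem stmt_5 (n M N : ℕ) (hM : 1 ≤ M) (hN : 1 ≤ N)
    (a b T L : ℝ) (hab : a < b) (hT : 0 < T) (hL : 0 < L)
    (φ : ℝ → ℝ → (Fin n → ℝ) → ℝ → ℝ → (Fin n → ℝ))
    (hφ : ∀ (t x : ℝ) (w w' : Fin n → ℝ) (τ' h' : ℝ),
      ‖φ t x w τ' h' - φ t x w' τ' h'‖ ≤ L * ‖w - w'‖)
    (d : ℕ → ℕ → ℝ) (hd : ∀ k, k < N → ∀ i, i ≤ M → d k i ∈ Set.Icc a b)
    (u v : ℕ → ℕ → Fin n → ℝ)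
    (hu : ∀ k, k < N → ∀ i, i ≤ M → u (k + 1) i =
      plin n a ((b - a) / M) M (u k) (d k i)
        + (T / N) • φ ((k : ℝ) * (T / N)) (d k i)
            (plin n a ((b - a) / M) M (u k) (d k i)) (T / N) ((b - a) / M))
    (hv : ∀ k, k < N → ∀ i, i ≤ M → v (k + 1) i =
      plin n a ((b - a) / M) M (v k) (d k i)
        + (T / N) • φ ((k : ℝ) * (T / N)) (d k i)
            (plin n a ((b - a) / M) M (v k) (d k i)) (T / N) ((b - a) / M)) :
    ∀ k, k ≤ N → ∀ i, i ≤ M →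
      ‖u k i - v k i‖ ≤ Real.exp (T * L) *
        (Finset.range (M + 1)).sup' Finset.nonempty_range_add_one
          (fun j => ‖u 0 j - v 0 j‖) := by
  set D := (Finset.range (M + 1)).sup' Finset.nonempty_range_add_one
    (fun j => ‖u 0 j - v 0 j‖)
  have hD_le : ∀ j ≤ M, ‖u 0 j - v 0 j‖ ≤ D := fun j hj =>
    Finset.le_sup' (fun j => ‖u 0 j - v 0 j‖) (Finset.mem_range.2 (by omega))
  have hD0 : 0 ≤ D := (norm_nonneg _).trans (hD_le 0 (Nat.zero_le _))
  have hM0 : (0 : ℝ) < M := by exact_mod_cast hM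
  have hN0 : (0 : ℝ) < N := by exact_mod_cast hN
  have hτ : 0 ≤ T / N := (div_pos hT hN0).le
  have hh : 0 < (b - a) / M := div_pos (sub_pos.2 hab) hM0
  have hend : a + M * ((b - a) / M) = b := by
    field_simp; ring
  have hgrowth : ∀ k ≤ N, ∀ i ≤ M,
      ‖u k i - v k i‖ ≤ Real.exp (k * (T / N * L)) * D := by
    intro k
    induction k with
    | zero => intro _ i hi; simpa using hD_le i hi
    | succ k ih =>
      intro hk i hi
      have hplin := norm_plin_sub_le hM hh (by rw [hend]; exact hd k hk i hi)
        (ih (Nat.le_of_succ_le hk))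
      rw [hu k hk i hi, hv k hk i hi]
      refine (norm_step_sub_le (f := fun y =>
        φ ((k : ℝ) * (T / N)) (d k i) y (T / N) ((b - a) / M)) hτ (hφ _ _ _ _ _ _)).trans ?_
      refine (mul_le_mul_of_nonneg_left hplin (Real.exp_pos _).le).trans_eq ?_
      rw [← mul_assoc, ← Real.exp_add]
      push_cast
      ring_nf
  intro k hk i hi
  refine (hgrowth k hk i hi).trans (mul_le_mul_of_nonneg_right (Real.exp_le_exp.2 ?_) hD0)
  have hkN : (k : ℝ) ≤ N := by exact_mod_cast hk
  calc (k : ℝ) * (T / N * L) ≤ N * (T / N * L) :=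
        mul_le_mul_of_nonneg_right hkN (mul_nonneg hτ hL.le)
    _ = T * L := by field_simp
end

section
/- Fix real numbers a < b, T > 0 and integers M, N ≥ 1; set h = (b−a)/M, τ = T/N, grid points x_i = a + i·h for i = 0,…,M, and time levels t_k = k·τ for k = 0,…,N. Let φ : ℝ × ℝ × ℝⁿ × ℝ × ℝ → ℝⁿ satisfy ‖φ(t,x,y,τ,h) − φ(t,x,z,τ,h)‖_∞ ≤ L‖y − z‖_∞ for some L > 0 and all arguments. Let d_{k,i} ∈ [a,b] be given departure points, let y : [0,T] × [a,b] → ℝⁿ, write Y^k for the nodal values (y(t_k, x_0),…,y(t_k, x_M)), and suppose there is ε ≥ 0 such that for all k = 0,…,N−1 and i = 0,…,M the local truncation bound ‖y(t_{k+1}, x_i) − P[Y^k](d_{k,i}) − τ·φ(t_k, d_{k,i}, P[Y^k](d_{k,i}), τ, h)‖_∞ ≤ τ·ε holds. If the nodal values (u^k_i) are generated by the one-step semi-Lagrangian method u^{k+1}_i = P[u^k](d_{k,i}) + τ·φ(t_k, d_{k,i}, P[u^k](d_{k,i}), τ, h), then for every k = 0,…,N, max_{0 ≤ i ≤ M} ‖u^k_i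 − y(t_k, x_i)‖_∞ ≤ e^{T·L} · max_{0 ≤ i ≤ M} ‖u^0_i − y(0, x_i)‖_∞ + (ε/L)·(e^{T·L} − 1). -/
/-- Linear interpolation on `[a, b]` does not increase the maximum norm of differences of nodal
values. -/
theorem norm_plin_sub_plin_le {n M : ℕ} (hM : 1 ≤ M) {a b : ℝ} (hab : a < b)
    {w w' : ℕ → Fin n → ℝ} {E x : ℝ} (hx : x ∈ Set.Icc a b)
    (hw : ∀ j, j ≤ M → ‖w j - w' j‖ ≤ E) :
    ‖plin n a ((b - a) / M) M w x - plin n a ((b - a) / M) M w' x‖ ≤ E := by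
  have hM0 : (0 : ℝ) < M := by exact_mod_cast hM
  have hh : 0 < (b - a) / M := div_pos (sub_pos.2 hab) hM0
  have hs0 : 0 ≤ (x - a) / ((b - a) / M) := div_nonneg (sub_nonneg.2 hx.1) hh.le
  have hsM : (x - a) / ((b - a) / M) ≤ M := by
    rw [div_le_iff₀ hh, mul_div_cancel₀ _ hM0.ne']
    linarith [hx.2]
  unfold plin
  generalize (b - a) / (M : ℝ) = h at hh hs0 hsM ⊢
  set s := (x - a) / h with hs
  set i := min (M - 1) ⌊s⌋₊ with hi
  have hθ : (x - (a + (i : ℝ) * h)) / h = s - i := by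
    rw [hs]
    field_simp
    ring
  have his : (i : ℝ) ≤ s :=
    (Nat.cast_le.2 (min_le_right _ _)).trans (Nat.floor_le hs0)
  have hsi : s ≤ i + 1 := by
    rcases le_total (M - 1) ⌊s⌋₊ with hle | hle
    · have : i + 1 = M := by omega
      calc s ≤ M := hsM
        _ = i + 1 := by exact_mod_cast this.symm
    · rw [hi, min_eq_right hle]
      exact (Nat.lt_floor_add_one s).le
  have hcomb := (convex_closedBall (0 : Fin n → ℝ) E)
    (mem_closedBall_zero_iff.2 (hw i (by omega)))
    (mem_closedBall_zero_iff.2 (hw (i + 1) (by omega)))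
    (sub_nonneg.2 (sub_le_iff_le_add'.2 hsi)) (sub_nonneg.2 his) (by ring)
  rw [mem_closedBall_zero_iff] at hcomb
  refine le_of_eq_of_le (congrArg norm ?_) hcomb
  simp only [hθ]
  module

/-- One step of the discrete Gronwall inequality. -/
theorem gronwall_bound_step {L τ ε E : ℝ} (hL : 0 < L) (hε : 0 ≤ ε)
    (hE : 0 ≤ E) (k : ℕ) :
    (1 + τ * L) * (Real.exp (k * τ * L) * E + ε / L * (Real.exp (k * τ * L) - 1)) + τ * ε ≤
      Real.exp ((k + 1) * τ * L) * E + ε / L * (Real.exp ((k + 1) * τ * L) - 1) := by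
  have hexp : (1 + τ * L) * Real.exp (k * τ * L) ≤ Real.exp ((k + 1) * τ * L) := by
    rw [show ((k : ℝ) + 1) * τ * L = τ * L + k * τ * L by ring, Real.exp_add]
    gcongr
    linarith [Real.add_one_le_exp (τ * L)]
  have hmul := mul_le_mul_of_nonneg_right hexp (add_nonneg hE (div_nonneg hε hL.le))
  have hcancel : τ * L * (ε / L) = τ * ε := by field_simp
  linarith

/-- Maximum-error bound (part 3 of Theorem 3.5): if the local truncation error of the
one-step semi-Lagrangian method with respect to a function `y` is at most `τ·ε` at every
step and node, then
`max_i ‖u^k_i - y(t_k, x_i)‖_∞ ≤ e^{TL} max_i ‖u^0_i - y(0, x_i)‖_∞ + (ε/L)(e^{TL} - 1)`. -/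
theorem stmt_6 (n M N : ℕ) (hM : 1 ≤ M) (hN : 1 ≤ N)
    (a b T L : ℝ) (hab : a < b) (hT : 0 < T) (hL : 0 < L)
    (φ : ℝ → ℝ → (Fin n → ℝ) → ℝ → ℝ → (Fin n → ℝ))
    (hφ : ∀ (t x : ℝ) (w w' : Fin n → ℝ) (τ' h' : ℝ),
      ‖φ t x w τ' h' - φ t x w' τ' h'‖ ≤ L * ‖w - w'‖)
    (d : ℕ → ℕ → ℝ) (hd : ∀ k, k < N → ∀ i, i ≤ M → d k i ∈ Set.Icc a b)
    (y : ℝ → ℝ → (Fin n → ℝ)) (ε : ℝ) (hε : 0 ≤ ε)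
    (htrunc : ∀ k, k < N → ∀ i, i ≤ M →
      ‖y (((k : ℝ) + 1) * (T / N)) (a + (i : ℝ) * ((b - a) / M))
        - plin n a ((b - a) / M) M
            (fun j => y ((k : ℝ) * (T / N)) (a + (j : ℝ) * ((b - a) / M))) (d k i)
        - (T / N) • φ ((k : ℝ) * (T / N)) (d k i)
            (plin n a ((b - a) / M) M
              (fun j => y ((k : ℝ) * (T / N)) (a + (j : ℝ) * ((b - a) / M))) (d k i))
            (T / N) ((b - a) / M)‖ ≤ (T / N) * ε)
    (u : ℕ → ℕ → Fin n → ℝ)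
    (hu : ∀ k, k < N → ∀ i, i ≤ M → u (k + 1) i =
      plin n a ((b - a) / M) M (u k) (d k i)
        + (T / N) • φ ((k : ℝ) * (T / N)) (d k i)
            (plin n a ((b - a) / M) M (u k) (d k i)) (T / N) ((b - a) / M)) :
    ∀ k, k ≤ N → ∀ i, i ≤ M →
      ‖u k i - y ((k : ℝ) * (T / N)) (a + (i : ℝ) * ((b - a) / M))‖ ≤
        Real.exp (T * L) *
          (Finset.range (M + 1)).sup' Finset.nonempty_range_add_one
            (fun j => ‖u 0 j - y 0 (a + (j : ℝ) * ((b - a) / M))‖)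
        + (ε / L) * (Real.exp (T * L) - 1) := by
  set E₀ := (Finset.range (M + 1)).sup' Finset.nonempty_range_add_one
    (fun j => ‖u 0 j - y 0 (a + (j : ℝ) * ((b - a) / M))‖)
  have hE₀_le : ∀ i, i ≤ M → ‖u 0 i - y 0 (a + (i : ℝ) * ((b - a) / M))‖ ≤ E₀ := fun i hi =>
    Finset.le_sup' (fun j : ℕ => ‖u 0 j - y 0 (a + (j : ℝ) * ((b - a) / M))‖)
      (Finset.mem_range.2 (Nat.lt_succ_of_le hi))
  have hE₀_nonneg : 0 ≤ E₀ := (norm_nonneg _).trans (hE₀_le 0 M.zero_le)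
  clear_value E₀
  have hN0 : (0 : ℝ) < N := by exact_mod_cast hN
  have hτ : 0 < T / N := div_pos hT hN0
  have hτN : N * (T / N) = T := mul_div_cancel₀ T hN0.ne'
  generalize T / (N : ℝ) = τ at *
  have hbound : ∀ k, k ≤ N → ∀ i, i ≤ M →
      ‖u k i - y ((k : ℝ) * τ) (a + (i : ℝ) * ((b - a) / M))‖ ≤
        Real.exp (k * τ * L) * E₀ + ε / L * (Real.exp (k * τ * L) - 1) := by
    intro k
    induction k with
    | zero => simpa using hE₀_le
    | succ k ih =>
      intro hk i hi
      have hP := norm_plin_sub_plin_le hM hab (hd k hk i hi)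
        (w' := fun j => y ((k : ℝ) * τ) (a + (j : ℝ) * ((b - a) / M))) (ih (Nat.le_of_succ_le hk))
      have htr := htrunc k hk i hi
      rw [hu k hk i hi]
      push_cast
      refine le_trans ?_ (gronwall_bound_step (τ := τ) hL hε hE₀_nonneg k)
      set p := plin n a ((b - a) / M) M (u k) (d k i)
      set q := plin n a ((b - a) / M) M
        (fun j => y ((k : ℝ) * τ) (a + (j : ℝ) * ((b - a) / M))) (d k i)
      have hφ' := hφ (k * τ) (d k i) p q τ ((b - a) / M)
      set f := φ (k * τ) (d k i) p τ ((b - a) / M)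
      set g := φ (k * τ) (d k i) q τ ((b - a) / M)
      set z := y (((k : ℝ) + 1) * τ) (a + (i : ℝ) * ((b - a) / M))
      calc ‖p + τ • f - z‖ = ‖(p - q) + τ • (f - g) - (z - q - τ • g)‖ := by
            congr 1
            module
        _ ≤ ‖p - q‖ + ‖τ • (f - g)‖ + ‖z - q - τ • g‖ :=
            (norm_sub_le _ _).trans (by gcongr; exact norm_add_le _ _)
        _ ≤ ‖p - q‖ + τ * (L * ‖p - q‖) + τ * ε := by
            rw [norm_smul, Real.norm_of_nonneg hτ.le]
            gcongr
        _ = (1 + τ * L) * ‖p - q‖ + τ * ε := by ring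
        _ ≤ _ := by gcongr
  intro k hk i hi
  have hkT : k * τ ≤ T := by
    rw [← hτN]
    gcongr
  refine (hbound k hk i hi).trans ?_
  gcongr
end
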